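/- Let α, β, γ ∈ ℂ with α+β ∉ ℤ and γ ∉ ℤ, and let X, Y, Z be nonnegative integers. Then ∑ (−1)^{i+j+k+l+m} · ((β)_n (α+β−γ)_n / (n! (α+β)_n)) · C(β−γ, i) · C(−β−n, j) · C(α+β+n−1, k) · C(γ−α−β−n, l) · C(n, m) = (α)_X (β)_Y (1−γ)_Z (γ)_{X+Y−Z} / (X! · Y! · Z! · (α+β)_{X+Y−Z}), where the (finite) sum ranges over all nonnegative integers i, j, k, l, m, n satisfying i+l+n−m = X, j+m = Y and k+l = Z. -/

import Mathlib

open Finset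

/-- Pochhammer symbol `(a)_k` for complex `a` and integer `k`. -/
noncomputable def cpoch (a : ℂ) (k : ℤ) : ℂ :=
  if 0 ≤ k then ∏ i ∈ Finset.range k.toNat, (a + (i : ℂ))
  else (∏ i ∈ Finset.range (-k).toNat, (a + (k : ℂ) + (i : ℂ)))⁻¹

/-- Generalized binomial coefficient `C(a, r) = a(a-1)⋯(a-r+1)/r!`. -/
noncomputable def genBinom (a : ℂ) (r : ℕ) : ℂ :=
  (∏ i ∈ Finset.range r, (a - (i : ℂ))) / (r.factorial : ℂ)

/-!
Multiplied by `(α + β)_{X + Y}`, the identity becomes polynomial in `α, β, γ`. Put `q = X - i` and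
`p = n - m`, so that `l + p = q`. At fixed `q` the summand is a function of `l` times a function
of `m`, and both sums are Chu–Vandermonde. The remaining sum over `q` is balanced and is
evaluated by the Pfaff–Saalschütz identity, which follows by induction on the length from a
recurrence whose error terms cancel after an index shift.
-/

local notation:max "⦅" a "⦆_" n:max => Polynomial.eval a (ascPochhammer _ n)

section RisingFactorial

variable {R : Type*} [CommRing R]

lemma ascPochhammer_eval_add_index (a : R) (m n : ℕ) :
    ⦅a⦆_(m + n) = ⦅a⦆_m * ⦅a + m⦆_n := by
  simp [← ascPochhammer_mul, Polynomial.eval_comp]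

lemma ascPochhammer_succ_eval_left (a : R) (n : ℕ) :
    ⦅a⦆_(n + 1) = a * ⦅a + 1⦆_n := by
  simp [ascPochhammer_succ_left, Polynomial.eval_comp]

lemma ascPochhammer_eval_eq_prod_range (a : R) (n : ℕ) :
    ⦅a⦆_n = ∏ i ∈ range n, (a + i) := by
  induction n with
  | zero => simp
  | succ n ih => rw [ascPochhammer_succ_eval, ih, prod_range_succ]

lemma ascPochhammer_eval_add_one (a : R) (n : ℕ) :
    ⦅a + 1⦆_n = ⦅a⦆_n + n * ⦅a + 1⦆_(n - 1) := by
  cases n with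
  | zero => simp
  | succ n =>
    rw [ascPochhammer_succ_eval, ascPochhammer_succ_eval_left, Nat.add_sub_cancel]
    push_cast
    ring

lemma neg_one_pow_mul_ascPochhammer_eval (a : R) (n : ℕ) :
    (-1) ^ n * ⦅a⦆_n = ⦅1 - a - n⦆_n := by
  rw [show 1 - a - (n : R) = -a - n + 1 by ring, ← descPochhammer_eval_eq_ascPochhammer,
    ← neg_neg a, ascPochhammer_eval_neg_eq_descPochhammer, ← mul_assoc, ← mul_pow]
  simp

lemma ascPochhammer_eval_div_eq {K : Type*} [Field K] {c : K} {n r : ℕ} (k : ℕ)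
    (hc : ⦅c⦆_(n + r) ≠ 0) :
    ⦅c + n - k⦆_k / ⦅c⦆_n = ⦅c + n - k⦆_(k + r) / ⦅c⦆_(n + r) := by
  have hn : ⦅c⦆_n ≠ 0 := by
    rw [ascPochhammer_eval_add_index] at hc
    exact left_ne_zero_of_mul hc
  rw [div_eq_div_iff hn hc, ascPochhammer_eval_add_index _ k, ascPochhammer_eval_add_index c,
    sub_add_cancel]
  ring

lemma neg_one_pow_div_factorial {K : Type*} [Field K] [CharZero K] (k l : ℕ) :
    (-1) ^ k / (k.factorial : K) =
      (-1) ^ (k + l) * ⦅-((k + l : ℕ) : K)⦆_l / (k + l).factorial := by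
  rw [ascPochhammer_eval_neg_eq_descPochhammer, descPochhammer_eval_eq_descFactorial,
    ← Nat.factorial_mul_descFactorial (Nat.le_add_left l k), Nat.add_sub_cancel_right,
    ← mul_assoc, ← pow_add, add_assoc, pow_add, (Even.add_self l).neg_one_pow]
  push_cast
  rw [mul_one, mul_div_mul_right]
  exact_mod_cast (Nat.descFactorial_pos.2 (Nat.le_add_left l k)).ne'

theorem sum_antidiagonal_choose_succ_mul_add (f : ℕ → ℕ → R) (n : ℕ) :
    ∑ p ∈ antidiagonal (n + 1), ((n + 1).choose p.1 : R) * f p.1 p.2 =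
      ∑ p ∈ antidiagonal n, (n.choose p.1 : R) * (f p.1 (p.2 + 1) + f (p.1 + 1) p.2) := by
  simp only [sum_antidiagonal_choose_succ_mul, mul_add, sum_add_distrib]
  congr 1
  refine sum_congr rfl fun p hp ↦ ?_
  rw [Nat.choose_symm_of_eq_add (mem_antidiagonal.1 hp).symm]

theorem sum_antidiagonal_choose_mul_shift (g : ℕ → ℕ → R) (n : ℕ) :
    ∑ p ∈ antidiagonal n, (n.choose p.1 : R) * (p.1 * g p.1 (p.2 + 1)) =
      ∑ p ∈ antidiagonal n, (n.choose p.1 : R) * (p.2 * g (p.1 + 1) p.2) := by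
  cases n with
  | zero => simp
  | succ n =>
    rw [Nat.sum_antidiagonal_succ, Nat.sum_antidiagonal_succ']
    simp only [Nat.cast_zero, zero_mul, mul_zero, zero_add]
    refine sum_congr rfl fun ⟨q, i⟩ hp ↦ ?_
    obtain rfl : q + i = n := mem_antidiagonal.1 hp
    have h := Nat.choose_succ_right_eq (q + i + 1) q
    rw [show q + i + 1 - q = i + 1 by lia] at h
    replace h := congrArg (Nat.cast (R := R)) h
    push_cast at h ⊢
    linear_combination g (q + 1) (i + 1) * h

theorem ascPochhammer_eval_add (a b : R) (n : ℕ) :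
    ⦅a + b⦆_n = ∑ p ∈ antidiagonal n, (n.choose p.1 : R) * (⦅a⦆_p.1 * ⦅b⦆_p.2) := by
  have desc_eq (r : R) (k : ℕ) : (descPochhammer ℤ k).smeval r = (-1) ^ k * ⦅-r⦆_k := by
    rw [Polynomial.descPochhammer_smeval_eq_ascPochhammer, Polynomial.ascPochhammer_smeval_eq_eval,
      neg_one_pow_mul_ascPochhammer_eval]
    ring_nf
  have h := Ring.descPochhammer_smeval_add n (Commute.all (-a) (-b))
  simp only [desc_eq, neg_add_rev, neg_neg, add_comm b] at h
  refine (isUnit_one.neg.pow n).mul_left_cancel (h.trans ?_)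
  rw [mul_sum]
  refine sum_congr rfl fun ⟨q, i⟩ hp ↦ ?_
  obtain rfl : q + i = n := mem_antidiagonal.1 hp
  ring

theorem ascPochhammer_eval_sub (a c : R) (n : ℕ) :
    ⦅c - a⦆_n =
      ∑ p ∈ antidiagonal n, (n.choose p.1 : R) * ((-1) ^ p.1 * ⦅a⦆_p.1 * ⦅c + p.1⦆_p.2) := by
  rw [show c - a = 1 - (a + (1 - c - n)) - n by ring, ← neg_one_pow_mul_ascPochhammer_eval,
    ascPochhammer_eval_add, mul_sum]
  refine sum_congr rfl fun ⟨q, i⟩ hp ↦ ?_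
  obtain rfl : q + i = n := mem_antidiagonal.1 hp
  rw [show c + (q : R) = 1 - (1 - c - (q + i : ℕ)) - i by push_cast; ring,
    ← neg_one_pow_mul_ascPochhammer_eval]
  ring

theorem pfaff_saalschutz (a b c : R) (n : ℕ) :
    ∑ p ∈ antidiagonal n, (n.choose p.1 : R) *
        (⦅a⦆_p.1 * ⦅b⦆_p.1 * ⦅c - a - b⦆_p.2 * ⦅c + p.1⦆_p.2) =
      ⦅c - a⦆_n * ⦅c - b⦆_n := by
  induction n with
  | zero => simp
  | succ n ih =>
    let f (q i : ℕ) : R := ⦅a⦆_q * ⦅b⦆_q * ⦅c - a - b⦆_i * ⦅c + q⦆_i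
    -- `g` is a Wilf–Zeilberger certificate: its two terms in `recurrence` telescope.
    let g (q i : ℕ) : R := ⦅a⦆_q * ⦅b⦆_q * ⦅c - a - b⦆_i * ⦅c + q⦆_(i - 1)
    have recurrence (q i : ℕ) (hqi : q + i = n) : f q (i + 1) + f (q + 1) i =
        (c - a + n) * (c - b + n) * f q i - q * g q (i + 1) + i * g (q + 1) i := by
      have hshift := ascPochhammer_eval_add_one (c + q) i
      subst hqi
      simp only [f, g, ascPochhammer_succ_eval, Nat.add_sub_cancel, Nat.cast_add, Nat.cast_one,
        ← add_assoc]
      linear_combination ⦅a⦆_q * (a + q) * (⦅b⦆_q * (b + q)) * ⦅c - a - b⦆_i * hshift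
    calc ∑ p ∈ antidiagonal (n + 1), ((n + 1).choose p.1 : R) * f p.1 p.2
        = ∑ p ∈ antidiagonal n, ((c - a + n) * (c - b + n) * ((n.choose p.1 : R) * f p.1 p.2) -
            (n.choose p.1 : R) * (p.1 * g p.1 (p.2 + 1)) +
            (n.choose p.1 : R) * (p.2 * g (p.1 + 1) p.2)) := by
          rw [sum_antidiagonal_choose_succ_mul_add]
          refine sum_congr rfl fun p hp ↦ ?_
          rw [recurrence p.1 p.2 (mem_antidiagonal.1 hp)]
          ring
      _ = (c - a + n) * (c - b + n) * (⦅c - a⦆_n * ⦅c - b⦆_n) := by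
          rw [sum_add_distrib, sum_sub_distrib, ← mul_sum, sum_antidiagonal_choose_mul_shift g, ih]
          ring
      _ = ⦅c - a⦆_(n + 1) * ⦅c - b⦆_(n + 1) := by
          rw [ascPochhammer_succ_eval, ascPochhammer_succ_eval]
          ring

theorem sum_choose_mul_ascPochhammer (α β γ z : R) (X Y : ℕ) :
    ∑ x ∈ antidiagonal X, ∑ w ∈ antidiagonal x.1, ∑ y ∈ antidiagonal Y,
        (X.choose x.1 : R) * x.1.choose w.1 * Y.choose y.1 *
          ((-1) ^ y.1 * ⦅-z⦆_w.1 * ⦅γ - β⦆_x.2 * ⦅β⦆_(Y + w.2) * ⦅α + β - γ⦆_(x.1 + y.1) *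
            ⦅α + β - z + x.1 + y.1⦆_(y.2 + x.2)) =
      ⦅α⦆_X * ⦅β⦆_Y * ⦅γ - z⦆_(Y + X) := by
  have sum_w (q : ℕ) := ascPochhammer_eval_add (-z) (β + Y) q
  have sum_y (q : ℕ) : ⦅γ - z⦆_Y = ∑ y ∈ antidiagonal Y, (Y.choose y.1 : R) *
      ((-1) ^ y.1 * ⦅α + β - γ + q⦆_y.1 * ⦅α + β - z + q + y.1⦆_y.2) := by
    rw [← ascPochhammer_eval_sub]
    ring_nf
  have sum_x : ∑ x ∈ antidiagonal X, (X.choose x.1 : R) * (⦅α + β - γ⦆_x.1 *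
      ⦅-z + (β + Y)⦆_x.1 * ⦅γ - β⦆_x.2 * ⦅α + β - z + Y + x.1⦆_x.2) =
        ⦅γ - z + Y⦆_X * ⦅α⦆_X := by
    convert pfaff_saalschutz (α + β - γ) (-z + (β + Y)) (α + β - z + Y) X using 5 <;> ring_nf
  calc _ = ∑ x ∈ antidiagonal X, (X.choose x.1 : R) *
        (⦅β⦆_Y * ⦅α + β - γ⦆_x.1 * ⦅γ - β⦆_x.2 * ⦅α + β - z + Y + x.1⦆_x.2) *
          (⦅-z + (β + Y)⦆_x.1 * ⦅γ - z⦆_Y) := by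
        refine sum_congr rfl fun ⟨q, i⟩ _ ↦ ?_
        simp only
        rw [sum_w, sum_y q, sum_mul_sum, mul_sum]
        refine sum_congr rfl fun ⟨l, p⟩ _ ↦ ?_
        rw [mul_sum]
        refine sum_congr rfl fun ⟨m, j⟩ hy ↦ ?_
        obtain rfl : m + j = Y := mem_antidiagonal.1 hy
        simp only [ascPochhammer_eval_add_index (α + β - γ), ascPochhammer_eval_add_index β _ p,
          ascPochhammer_eval_add_index _ j i]
        rw [show α + β - z + (q : R) + m + j = α + β - z + (m + j : ℕ) + q by push_cast; ring]
        ring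
    _ = ⦅α⦆_X * ⦅β⦆_Y * ⦅γ - z⦆_(Y + X) := by
        rw [ascPochhammer_eval_add_index (γ - z) Y X,
          show ⦅α⦆_X * ⦅β⦆_Y * (⦅γ - z⦆_Y * ⦅γ - z + Y⦆_X) =
            ⦅β⦆_Y * ⦅γ - z⦆_Y * (⦅γ - z + Y⦆_X * ⦅α⦆_X) by ring, ← sum_x, mul_sum]
        exact sum_congr rfl fun _ _ ↦ by ring

end RisingFactorial

section Reindexing

variable {M : Type*} [AddCommMonoid M] [TopologicalSpace M]

theorem tsum_ite_eq_sum_antidiagonal (X Y Z : ℕ) (f : ℕ → ℕ → ℕ → ℕ → ℕ → ℕ → M)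
    (hf : ∀ i j k l m n, n < m → f i j k l m n = 0) :
    ∑' t : ℕ × ℕ × ℕ × ℕ × ℕ × ℕ,
      (fun i j k l m n ↦
        if i + l + n = X + m ∧ j + m = Y ∧ k + l = Z then f i j k l m n else 0)
          t.1 t.2.1 t.2.2.1 t.2.2.2.1 t.2.2.2.2.1 t.2.2.2.2.2 =
      ∑ x ∈ antidiagonal X, ∑ w ∈ antidiagonal x.1, ∑ y ∈ antidiagonal Y,
        if w.1 ≤ Z then f x.2 y.2 (Z - w.1) w.1 y.1 (w.2 + y.1) else 0 := by
  let S := (antidiagonal X).sigma fun x ↦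
    ((antidiagonal x.1) ×ˢ antidiagonal Y).filter fun u ↦ u.1.1 ≤ Z
  let φ : (_ : ℕ × ℕ) × (ℕ × ℕ) × (ℕ × ℕ) → ℕ × ℕ × ℕ × ℕ × ℕ × ℕ := fun ⟨x, w, y⟩ ↦
    (x.2, y.2, Z - w.1, w.1, y.1, w.2 + y.1)
  have φ_injOn : Set.InjOn φ S := by
    rintro ⟨⟨q, i⟩, ⟨l, p⟩, m, j⟩ h ⟨⟨q', i'⟩, ⟨l', p'⟩, m', j'⟩ h' heq
    simp only [S, φ, mem_coe, mem_sigma, mem_filter, mem_product, HasAntidiagonal.mem_antidiagonal,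
      Prod.mk.injEq] at h h' heq
    obtain ⟨rfl, rfl, -, rfl, rfl, hp⟩ := heq
    obtain rfl : p = p' := by lia
    obtain rfl : q = q' := by lia
    rfl
  rw [tsum_eq_sum (s := S.image φ), sum_image φ_injOn]
  · simp only [S, φ, sum_sigma, sum_filter, sum_product]
    refine sum_congr rfl fun ⟨q, i⟩ hx ↦ sum_congr rfl fun ⟨l, p⟩ hw ↦
      sum_congr rfl fun ⟨m, j⟩ hy ↦ ?_
    rw [HasAntidiagonal.mem_antidiagonal] at hx hw hy
    simp only at hx hw hy ⊢
    split_ifs <;> first | rfl | lia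
  · rintro ⟨i, j, k, l, m, n⟩ ht
    simp only [ite_eq_right_iff]
    rintro ⟨hX, hY, hZ⟩
    by_contra hne
    have hmn : m ≤ n := not_lt.1 fun h ↦ hne (hf _ _ _ _ _ _ h)
    refine ht (mem_image.2 ⟨⟨(X - i, i), (l, n - m), (m, j)⟩, ?_, ?_⟩)
    · simp only [S, mem_sigma, mem_filter, mem_product, HasAntidiagonal.mem_antidiagonal]
      lia
    · simp only [φ, Prod.mk.injEq, true_and]
      lia

end Reindexing

section GenBinom

lemma genBinom_eq_ascPochhammer (a : ℂ) (r : ℕ) :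
    genBinom a r = ⦅a - r + 1⦆_r / (r.factorial : ℂ) := by
  rw [genBinom, ← descPochhammer_eval_eq_prod_range, descPochhammer_eval_eq_ascPochhammer]

lemma neg_one_pow_mul_genBinom (a : ℂ) (r : ℕ) :
    (-1) ^ r * genBinom a r = ⦅-a⦆_r / (r.factorial : ℂ) := by
  rw [genBinom_eq_ascPochhammer, ← mul_div_assoc, neg_one_pow_mul_ascPochhammer_eval]
  ring_nf

lemma genBinom_natCast (n r : ℕ) : genBinom n r = n.choose r := by
  rw [genBinom, ← descPochhammer_eval_eq_prod_range, Nat.cast_choose_eq_descPochhammer_div]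

end GenBinom

section Cpoch

/-- No factor vanishes in the denominator of `cpoch a k`. There is such a denominator only for
`k < 0`, and without this condition `cpoch a k` takes the junk value `0⁻¹ = 0`. -/
def CpochDefined (a : ℂ) (k : ℤ) : Prop :=
  ∀ r ∈ range (-k).toNat, a + k + r ≠ 0

lemma cpochDefined_of_forall_ne_intCast {a : ℂ} (ha : ∀ n : ℤ, a ≠ n) (k : ℤ) :
    CpochDefined a k := by
  intro r _ h
  refine ha (-k - r) ?_
  push_cast
  linear_combination h

lemma cpoch_natCast (a : ℂ) (n : ℕ) : cpoch a n = ⦅a⦆_n := by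
  simp [cpoch, ascPochhammer_eval_eq_prod_range]

lemma cpoch_natCast_ne_zero {a : ℂ} (ha : ∀ n : ℤ, a ≠ n) (n : ℕ) : cpoch a n ≠ 0 := by
  rw [cpoch_natCast, ascPochhammer_eval_eq_prod_range, prod_ne_zero_iff]
  intro i _ h
  refine ha (-i) ?_
  push_cast
  linear_combination h

lemma cpoch_neg_natCast (a : ℂ) (n : ℕ) : cpoch a (-n : ℤ) = (⦅a - n⦆_n)⁻¹ := by
  rcases n.eq_zero_or_pos with rfl | hn
  · simp [cpoch]
  · simp [cpoch, hn.ne', ascPochhammer_eval_eq_prod_range, sub_eq_add_neg]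

lemma CpochDefined.ascPochhammer_ne_zero {a : ℂ} {n : ℕ} (h : CpochDefined a (-n : ℤ)) :
    ⦅a - n⦆_n ≠ 0 := by
  rw [ascPochhammer_eval_eq_prod_range, prod_ne_zero_iff]
  simpa [CpochDefined, sub_eq_add_neg] using h

theorem cpoch_sub_mul_ascPochhammer {a : ℂ} {m n : ℕ} (h : CpochDefined a (m - n : ℤ)) :
    cpoch a (m - n : ℤ) * ⦅a - n + m⦆_n = ⦅a⦆_m := by
  obtain ⟨d, rfl⟩ | ⟨d, rfl⟩ := (le_total n m).imp Nat.exists_eq_add_of_le Nat.exists_eq_add_of_le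
  · rw [show ((n + d : ℕ) - n : ℤ) = d by push_cast; ring, cpoch_natCast, add_comm n d,
      ascPochhammer_eval_add_index]
    push_cast
    ring_nf
  · rw [show (m - (m + d : ℕ) : ℤ) = -d by push_cast; ring] at h ⊢
    rw [cpoch_neg_natCast, inv_mul_eq_iff_eq_mul₀ h.ascPochhammer_ne_zero, add_comm m d,
      show a - ((d + m : ℕ) : ℂ) + m = a - d by push_cast; ring, ascPochhammer_eval_add_index,
      sub_add_cancel]

theorem ascPochhammer_mul_cpoch_sub {a : ℂ} {m n : ℕ} (h : CpochDefined a (m - n : ℤ)) :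
    ⦅a - n⦆_n * cpoch a (m - n : ℤ) = ⦅a - n⦆_m := by
  obtain ⟨d, rfl⟩ | ⟨d, rfl⟩ := (le_total n m).imp Nat.exists_eq_add_of_le Nat.exists_eq_add_of_le
  · rw [show ((n + d : ℕ) - n : ℤ) = d by push_cast; ring, cpoch_natCast,
      ascPochhammer_eval_add_index, sub_add_cancel]
  · rw [show (m - (m + d : ℕ) : ℤ) = -d by push_cast; ring] at h ⊢
    rw [cpoch_neg_natCast, mul_inv_eq_iff_eq_mul₀ h.ascPochhammer_ne_zero,
      ascPochhammer_eval_add_index]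
    push_cast
    ring_nf

end Cpoch

section Summand

/-- The summand of the coefficient identity at the index `(i, j, k, l, m, n)`. -/
noncomputable def ggrSummand (α β γ : ℂ) (i j k l m n : ℕ) : ℂ :=
  (-1 : ℂ) ^ (i + j + k + l + m) *
    (cpoch β (n : ℤ) * cpoch (α + β - γ) (n : ℤ) /
      ((n.factorial : ℂ) * cpoch (α + β) (n : ℤ))) *
    genBinom (β - γ) i * genBinom (-β - (n : ℂ)) j *
    genBinom (α + β + (n : ℂ) - 1) k * genBinom (γ - α - β - (n : ℂ)) l *
    genBinom (n : ℂ) m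

lemma ggrSummand_eq_zero_of_lt (α β γ : ℂ) (i j k l : ℕ) {m n : ℕ} (h : n < m) :
    ggrSummand α β γ i j k l m n = 0 := by
  simp [ggrSummand, genBinom_natCast, Nat.choose_eq_zero_of_lt h]

lemma ggrSummand_eq (α β γ : ℂ) (i j k l m p : ℕ) :
    ggrSummand α β γ i j k l m (p + m) =
      (-1) ^ (k + m) * ⦅γ - β⦆_i * ⦅β⦆_(p + m + j) * ⦅α + β - γ⦆_(p + m + l) *
        (⦅α + β + (p + m : ℕ) - k⦆_k / ⦅α + β⦆_(p + m)) /
          (i.factorial * j.factorial * k.factorial * l.factorial * m.factorial * p.factorial) := by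
  have hi := neg_one_pow_mul_genBinom (β - γ) i
  have hj := neg_one_pow_mul_genBinom (-β - (p + m : ℕ)) j
  have hl := neg_one_pow_mul_genBinom (γ - α - β - (p + m : ℕ)) l
  rw [show -(β - γ) = γ - β by ring] at hi
  rw [show -(-β - ((p + m : ℕ) : ℂ)) = β + (p + m : ℕ) by ring] at hj
  rw [show -(γ - α - β - ((p + m : ℕ) : ℂ)) = α + β - γ + (p + m : ℕ) by ring] at hl
  have hk := genBinom_eq_ascPochhammer (α + β + (p + m : ℕ) - 1) k
  rw [show α + β + ((p + m : ℕ) : ℂ) - 1 - k + 1 = α + β + (p + m : ℕ) - k by ring] at hk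
  have hm : genBinom ((p + m : ℕ) : ℂ) m / (p + m).factorial =
      (m.factorial * p.factorial : ℂ)⁻¹ := by
    rw [genBinom_natCast, add_comm, Nat.cast_add_choose]
    field_simp [Nat.factorial_ne_zero]
  calc ggrSummand α β γ i j k l m (p + m) = (-1) ^ (k + m) * ((-1) ^ i * genBinom (β - γ) i) *
        (cpoch β (p + m : ℕ) * ((-1) ^ j * genBinom (-β - (p + m : ℕ)) j)) *
        (cpoch (α + β - γ) (p + m : ℕ) *
          ((-1) ^ l * genBinom (γ - α - β - (p + m : ℕ)) l)) *
        (genBinom (α + β + (p + m : ℕ) - 1) k / cpoch (α + β) (p + m : ℕ)) *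
        (genBinom ((p + m : ℕ) : ℂ) m / (p + m).factorial) := by
        rw [ggrSummand]
        ring
    _ = _ := by
        rw [hi, hj, hl, hk, hm, cpoch_natCast, cpoch_natCast, cpoch_natCast,
          ascPochhammer_eval_add_index β (p + m), ascPochhammer_eval_add_index (α + β - γ) (p + m)]
        ring

theorem ggrSummand_eq_mul_choose (α β γ : ℂ) {i j k l m p q X Y Z : ℕ}
    (hq : l + p = q) (hX : q + i = X) (hY : m + j = Y) (hZ : k + l = Z)
    (hαβ : ⦅α + β⦆_(Y + X) ≠ 0) :
    ggrSummand α β γ i j k l m (p + m) =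
      (-1) ^ Z * ⦅α + β - Z + (Y + X : ℕ)⦆_Z /
          (X.factorial * Y.factorial * Z.factorial * ⦅α + β⦆_(Y + X)) *
        ((X.choose q : ℂ) * q.choose l * Y.choose m *
          ((-1) ^ m * ⦅-(Z : ℂ)⦆_l * ⦅γ - β⦆_i * ⦅β⦆_(Y + p) * ⦅α + β - γ⦆_(q + m) *
            ⦅α + β - Z + q + m⦆_(j + i))) := by
  have hlen : p + m + (j + i + l) = Y + X := by lia
  have hratio : ⦅α + β + (p + m : ℕ) - k⦆_k / ⦅α + β⦆_(p + m) =
      ⦅α + β - Z + q + m⦆_(j + i) * ⦅α + β - Z + (Y + X : ℕ)⦆_Z / ⦅α + β⦆_(Y + X) := by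
    rw [ascPochhammer_eval_div_eq k (hlen ▸ hαβ), hlen, show k + (j + i + l) = j + i + Z by lia,
      ascPochhammer_eval_add_index _ (j + i) Z]
    subst hq hX hY hZ
    push_cast
    ring_nf
  have hsign := neg_one_pow_div_factorial (K := ℂ) k l
  subst hq hX hY hZ
  rw [ggrSummand_eq, hratio, Nat.cast_add_choose, Nat.cast_add_choose, Nat.cast_add_choose,
    show p + m + j = m + j + p by lia, show p + m + l = l + p + m by lia]
  calc _ = (-1) ^ k / (k.factorial : ℂ) * ((-1) ^ m * ⦅γ - β⦆_i * ⦅β⦆_(m + j + p) *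
        ⦅α + β - γ⦆_(l + p + m) * (⦅α + β - (k + l : ℕ) + (l + p : ℕ) + m⦆_(j + i) *
          ⦅α + β - (k + l : ℕ) + (m + j + (l + p + i) : ℕ)⦆_(k + l) /
            ⦅α + β⦆_(m + j + (l + p + i))) /
              (i.factorial * j.factorial * l.factorial * m.factorial * p.factorial)) := by
        ring
    _ = _ := by
        rw [hsign]
        field_simp [Nat.factorial_ne_zero]

theorem sum_ggrSummand (α β γ : ℂ) (X Y Z : ℕ) (hαβ : ⦅α + β⦆_(Y + X) ≠ 0) :
    ∑ x ∈ antidiagonal X, ∑ w ∈ antidiagonal x.1, ∑ y ∈ antidiagonal Y,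
        (if w.1 ≤ Z then ggrSummand α β γ x.2 y.2 (Z - w.1) w.1 y.1 (w.2 + y.1) else 0) =
      (-1) ^ Z * ⦅α + β - Z + (Y + X : ℕ)⦆_Z /
          (X.factorial * Y.factorial * Z.factorial * ⦅α + β⦆_(Y + X)) *
        (⦅α⦆_X * ⦅β⦆_Y * ⦅γ - Z⦆_(Y + X)) := by
  simp only [← sum_choose_mul_ascPochhammer α β γ Z X Y, mul_sum]
  refine sum_congr rfl fun x hx ↦ sum_congr rfl fun w hw ↦ sum_congr rfl fun y hy ↦ ?_
  rw [HasAntidiagonal.mem_antidiagonal] at hx hw hy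
  split_ifs with hZ
  · exact ggrSummand_eq_mul_choose α β γ hw hx hy (Nat.sub_add_cancel hZ) hαβ
  · rw [ascPochhammer_eval_neg_coe_nat_of_lt (not_le.1 hZ)]
    ring

end Summand

theorem ggr_coefficient_identity_first_form_general (α β γ : ℂ) (X Y Z : ℕ)
    (hsum : cpoch (α + β) (X + Y : ℕ) ≠ 0) (hαβ : CpochDefined (α + β) (X + Y - Z : ℤ))
    (hγ : CpochDefined γ (X + Y - Z : ℤ)) :
    (∑' t : ℕ × ℕ × ℕ × ℕ × ℕ × ℕ,
      (fun i j k l m n ↦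
        if i + l + n = X + m ∧ j + m = Y ∧ k + l = Z then ggrSummand α β γ i j k l m n else 0)
          t.1 t.2.1 t.2.2.1 t.2.2.2.1 t.2.2.2.2.1 t.2.2.2.2.2) =
      cpoch α X * cpoch β Y * cpoch (1 - γ) Z * cpoch γ (X + Y - Z : ℤ) /
        (X.factorial * Y.factorial * Z.factorial * cpoch (α + β) (X + Y - Z : ℤ)) := by
  rw [cpoch_natCast, add_comm X Y] at hsum
  rw [show (X + Y - Z : ℤ) = ((Y + X : ℕ) - Z : ℤ) by push_cast; ring] at hαβ hγ ⊢
  have hden := cpoch_sub_mul_ascPochhammer hαβ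
  obtain ⟨hcpoch_ne, hasc_ne⟩ := mul_ne_zero_iff.1 (hden ▸ hsum)
  have hsign := neg_one_pow_mul_ascPochhammer_eval (γ - Z) Z
  rw [show 1 - (γ - Z) - (Z : ℂ) = 1 - γ by ring] at hsign
  rw [tsum_ite_eq_sum_antidiagonal X Y Z _ fun i j k l _ _ ↦ ggrSummand_eq_zero_of_lt α β γ i j k l,
    sum_ggrSummand α β γ X Y Z hsum, ← ascPochhammer_mul_cpoch_sub hγ, ← hden,
    cpoch_natCast, cpoch_natCast, cpoch_natCast, ← hsign]
  field_simp

theorem ggr_coefficient_identity_first_form (α β γ : ℂ)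
    (hαβ : ∀ n : ℤ, α + β ≠ (n : ℂ)) (hγ : ∀ n : ℤ, γ ≠ (n : ℂ)) (X Y Z : ℕ) :
    (∑' t : ℕ × ℕ × ℕ × ℕ × ℕ × ℕ,
      (fun (i j k l m n : ℕ) =>
        if i + l + n = X + m ∧ j + m = Y ∧ k + l = Z then
          (-1 : ℂ) ^ (i + j + k + l + m) *
            (cpoch β (n : ℤ) * cpoch (α + β - γ) (n : ℤ) /
              ((n.factorial : ℂ) * cpoch (α + β) (n : ℤ))) *
            genBinom (β - γ) i * genBinom (-β - (n : ℂ)) j *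
            genBinom (α + β + (n : ℂ) - 1) k * genBinom (γ - α - β - (n : ℂ)) l *
            genBinom (n : ℂ) m
        else 0) t.1 t.2.1 t.2.2.1 t.2.2.2.1 t.2.2.2.2.1 t.2.2.2.2.2) =
    cpoch α (X : ℤ) * cpoch β (Y : ℤ) * cpoch (1 - γ) (Z : ℤ) *
        cpoch γ ((X : ℤ) + (Y : ℤ) - (Z : ℤ)) /
      ((X.factorial : ℂ) * (Y.factorial : ℂ) * (Z.factorial : ℂ) *
        cpoch (α + β) ((X : ℤ) + (Y : ℤ) - (Z : ℤ))) :=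
  ggr_coefficient_identity_first_form_general α β γ X Y Z
    (cpoch_natCast_ne_zero hαβ _)
    (cpochDefined_of_forall_ne_intCast hαβ _) (cpochDefined_of_forall_ne_intCast hγ _)
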